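/- Let β > 0 and let m ≥ 1 be an integer. There exists K > 0 depending only on m and β such that for all integers n ≥ 1 and all 1 ≤ a < b < c ≤ n, E[m(a,c)·m(b,c)] = (m(m−1)(1+β)²/(2+β)²) · (a·b·c^{2+2β})^{−1/(2+β)} · (1+θ) for some real θ with |θ| ≤ K/a. -/

import Mathlib

open Finset

/-- A parent sequence of length `N`: for each `t ∈ {2,…,N}` an index `f t ∈ {1,…,t-1}`. -/
def ParentSeq (N : ℕ) : Type :=
  ∀ t : Set.Icc 2 N, Set.Icc 1 ((t : ℕ) - 1)

noncomputable instance (N : ℕ) : Fintype (ParentSeq N) := by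
  unfold ParentSeq
  classical
  infer_instance

/-- The value of a parent sequence at `j` (junk value `0` outside `{2,…,N}`). -/
def pval {N : ℕ} (f : ParentSeq N) (j : ℕ) : ℕ :=
  if h : 2 ≤ j ∧ j ≤ N then (f ⟨j, Set.mem_Icc.mpr h⟩ : ℕ) else 0

/-- The degree `d_t(v_i)` of vertex `i` at time `t` in the tree determined by `f`. -/
def deg {N : ℕ} (f : ParentSeq N) (t i : ℕ) : ℕ :=
  ((Finset.Icc 2 t).filter (fun j => pval f j = i)).card + (if 2 ≤ i then 1 else 0)

/-- The Móri probability of the parent sequence `f`. -/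
noncomputable def moriP {N : ℕ} (β : ℝ) (f : ParentSeq N) : ℝ :=
  ∏ t ∈ Finset.Icc 2 N, ((deg f (t - 1) (pval f t) : ℝ) + β) / ((2 + β) * ((t : ℝ) - 1) - 2)

/-- Expectation of `X` under the Móri measure on parent sequences of length `N`. -/
noncomputable def moriE (N : ℕ) (β : ℝ) (X : ParentSeq N → ℝ) : ℝ :=
  ∑ f : ParentSeq N, moriP β f * X f

open Classical in
/-- Probability of an event under the Móri measure on parent sequences of length `N`. -/
noncomputable def moriPr (N : ℕ) (β : ℝ) (p : ParentSeq N → Prop) : ℝ :=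
  ∑ f : ParentSeq N, if p f then moriP β f else 0

/-- The index of the merged vertex containing tree vertex `t` when merging in blocks of `m`. -/
def blk (m t : ℕ) : ℕ := (t - 1) / m + 1

/-- The number `m(a,b)` of edges joining `u_a` and `u_b` in the Móri graph `G^n_{m,β}`. -/
def mult (n m : ℕ) (f : ParentSeq (n * m)) (a b : ℕ) : ℕ :=
  ((Finset.Icc 2 (n * m)).filter (fun t =>
    (blk m t = a ∧ blk m (pval f t) = b) ∨ (blk m t = b ∧ blk m (pval f t) = a))).card

/-- The degree `d(u_i)` of the merged vertex `u_i` in the Móri graph `G^n_{m,β}`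
(a loop contributes `2`). -/
def degU (n m : ℕ) (f : ParentSeq (n * m)) (i : ℕ) : ℕ :=
  ((Finset.Icc 2 (n * m)).filter (fun t => blk m t = i)).card +
  ((Finset.Icc 2 (n * m)).filter (fun t => blk m (pval f t) = i)).card

/-!
Write `W i` for the degree of vertex `i` plus `β`, and `Z N = (2 + β) N - 2` for the total weight of
the tree with `N` vertices. When vertex `N + 1` is attached, the expectation of `W i` is multiplied
by `1 + 1 / Z N` and that of `W i * W j`, for `i ≠ j`, by `1 + 2 / Z N`. Hence the probability that
`u + 1` and `v + 1`, with `u < v`, choose the parents `i` and `j` is an explicit product of such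
factors and initial weights, divided by `Z u * Z v`. The product of the factors `1 + p / Z r` over
`s ≤ r < N` is `(N / s) ^ (p / (2 + β))` up to a factor `exp (O(1 / s))`, so with `γ = 1 / (2 + β)`
vertices `s ≠ t` choose the parents `i < j` with probability
`(1 + β)² / (2 + β)² * (i * j) ^ (-γ) * (s * t) ^ (γ - 1) * exp (O(1 / i))`.

The product `m(a,c) * m(b,c)` counts the `s, t` merged into `u_c` whose parents lie in the blocks of
`u_a` and `u_b`. A vertex has only one parent, so `s ≠ t`, which leaves `m (m - 1)` pairs `(s, t)`
and `m²` pairs of parents. Within a block, indices agree up to a factor `exp (O(1 / a))`, so all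
these terms have the same asymptotic value.
-/

theorem pval_of_mem {N t : ℕ} (f : ParentSeq N) (ht : t ∈ Set.Icc 2 N) :
    pval f t = f ⟨t, ht⟩ :=
  dif_pos ht

theorem pval_mem_Icc {N t : ℕ} (f : ParentSeq N) (ht : t ∈ Icc 2 N) :
    pval f t ∈ Icc 1 (t - 1) := by
  rw [pval_of_mem f (Finset.mem_Icc.mp ht), Finset.mem_Icc]
  exact (f ⟨t, _⟩).2

namespace ParentSeq

theorem ext_pval {N : ℕ} {f g : ParentSeq N} (h : ∀ t ∈ Icc 2 N, pval f t = pval g t) :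
    f = g := by
  funext t
  have ht := h t (Finset.mem_Icc.mpr t.2)
  rw [pval_of_mem f t.2, pval_of_mem g t.2] at ht
  exact Subtype.ext ht

/-- The parent sequence of length `N + 1` extending `f` in which vertex `N + 1` has parent `x`. -/
def snoc {N : ℕ} (f : ParentSeq N) (x : Set.Icc 1 N) : ParentSeq (N + 1) := fun t =>
  if h : (t : ℕ) ≤ N then f ⟨t, t.2.1, h⟩
  else ⟨x, x.2.1, by have := x.2.2; omega⟩

theorem pval_snoc_of_le {N t : ℕ} (f : ParentSeq N) (x : Set.Icc 1 N) (ht : t ≤ N) :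
    pval (f.snoc x) t = pval f t := by
  simp [pval, snoc, ht, ht.trans N.le_succ]

theorem pval_snoc_last {N : ℕ} (f : ParentSeq N) (x : Set.Icc 1 N) :
    pval (f.snoc x) (N + 1) = x := by
  have hN : 1 ≤ N := x.2.1.trans x.2.2
  simp [pval, snoc, hN]

theorem snoc_bijective {N : ℕ} (hN : 1 ≤ N) :
    Function.Bijective fun p : ParentSeq N × Set.Icc 1 N => p.1.snoc p.2 := by
  refine ⟨?_, fun F => ?_⟩
  · rintro ⟨f, x⟩ ⟨g, y⟩ (h : f.snoc x = g.snoc y)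
    refine Prod.ext (ext_pval fun t ht => ?_) (Subtype.ext ?_)
    · have htN := (Finset.mem_Icc.mp ht).2
      rw [← pval_snoc_of_le f x htN, h, pval_snoc_of_le g y htN]
    · rw [← pval_snoc_last f x, h, pval_snoc_last]
  · let f : ParentSeq N := fun t => F ⟨t, t.2.1, t.2.2.trans N.le_succ⟩
    let x : Set.Icc 1 N := F ⟨N + 1, by omega, le_rfl⟩
    refine ⟨(f, x), ext_pval fun t ht => ?_⟩
    obtain ⟨h2, hle⟩ := Finset.mem_Icc.mp ht
    rcases hle.eq_or_lt with rfl | hlt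
    · exact (pval_snoc_last f x).trans (pval_of_mem F ⟨h2, hle⟩).symm
    · have htN : t ≤ N := Nat.le_of_lt_succ hlt
      exact (pval_snoc_of_le f x htN).trans <|
        (pval_of_mem f ⟨h2, htN⟩).trans (pval_of_mem F ⟨h2, hle⟩).symm

theorem deg_snoc_of_le {N t : ℕ} (f : ParentSeq N) (x : Set.Icc 1 N) (i : ℕ) (ht : t ≤ N) :
    deg (f.snoc x) t i = deg f t i := by
  unfold deg
  congr 2
  refine Finset.filter_congr fun j hj => ?_
  rw [pval_snoc_of_le f x ((Finset.mem_Icc.mp hj).2.trans ht)]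

theorem deg_snoc_last {N : ℕ} (f : ParentSeq N) (x : Set.Icc 1 N) (i : ℕ) :
    deg (f.snoc x) (N + 1) i = deg f N i + if (x : ℕ) = i then 1 else 0 := by
  have hN : 1 ≤ N := x.2.1.trans x.2.2
  rw [← deg_snoc_of_le f x i le_rfl]
  unfold deg
  rw [← Finset.insert_Icc_right_eq_Icc_add_one (by omega : 2 ≤ N + 1), Finset.filter_insert,
    pval_snoc_last]
  split_ifs <;> simp [add_right_comm _ 1]

end ParentSeq

/-- The total attachment weight of a Móri tree with `N` vertices, i.e. the denominator of the
attachment probabilities of vertex `N + 1`. -/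
noncomputable def totalWeight (β : ℝ) (N : ℕ) : ℝ := (2 + β) * N - 2

theorem mul_le_totalWeight (β : ℝ) {N : ℕ} (hN : 1 ≤ N) : β * N ≤ totalWeight β N := by
  have : (1 : ℝ) ≤ N := mod_cast hN
  rw [totalWeight]
  linarith

theorem totalWeight_pos {β : ℝ} (hβ : 0 < β) {N : ℕ} (hN : 1 ≤ N) : 0 < totalWeight β N :=
  (mul_pos hβ (mod_cast hN)).trans_le (mul_le_totalWeight β hN)

/-- The attachment weight of vertex `i` in the tree with `N` vertices determined by `f`: vertex
`N + 1` attaches to `i` with probability proportional to it. -/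
noncomputable def attachWeight {N : ℕ} (β : ℝ) (f : ParentSeq N) (i : ℕ) : ℝ := deg f N i + β

theorem attachWeight_snoc {N : ℕ} (β : ℝ) (f : ParentSeq N) (x : Set.Icc 1 N) (i : ℕ) :
    attachWeight β (f.snoc x) i = attachWeight β f i + if (x : ℕ) = i then 1 else 0 := by
  rw [attachWeight, attachWeight, f.deg_snoc_last]
  push_cast
  ring

theorem attachWeight_self {N : ℕ} (β : ℝ) (f : ParentSeq N) :
    attachWeight β f N = (if 2 ≤ N then 1 else 0) + β := by
  have no_child : (Icc 2 N).filter (fun t => pval f t = N) = ∅ :=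
    Finset.filter_false_of_mem fun t ht => by
      have := Finset.mem_Icc.mp (pval_mem_Icc f ht)
      have := Finset.mem_Icc.mp ht
      omega
  simp [attachWeight, deg, no_child]

theorem sum_deg {N : ℕ} (f : ParentSeq N) : ∑ i ∈ Icc 1 N, deg f N i = 2 * (N - 1) := by
  have pval_maps : ∀ t ∈ Icc 2 N, pval f t ∈ Icc 1 N := fun t ht => by
    have := Finset.mem_Icc.mp (pval_mem_Icc f ht)
    have := Finset.mem_Icc.mp ht
    exact Finset.mem_Icc.mpr (by omega)
  have nonroot : (Icc 1 N).filter (2 ≤ ·) = Icc 2 N := by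
    ext i
    simp only [Finset.mem_filter, Finset.mem_Icc]
    omega
  unfold deg
  rw [Finset.sum_add_distrib, ← Finset.card_eq_sum_card_fiberwise pval_maps,
    ← Finset.card_filter, nonroot, Nat.card_Icc]
  omega

theorem sum_attachWeight {N : ℕ} (β : ℝ) (hN : 1 ≤ N) (f : ParentSeq N) :
    ∑ i ∈ Icc 1 N, attachWeight β f i = totalWeight β N := by
  simp only [attachWeight, totalWeight, Finset.sum_add_distrib, ← Nat.cast_sum, sum_deg,
    Finset.sum_const, Nat.card_Icc, nsmul_eq_mul]
  push_cast [hN]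
  ring

theorem moriE_const_mul (N : ℕ) (β k : ℝ) (X : ParentSeq N → ℝ) :
    moriE N β (fun f => k * X f) = k * moriE N β X := by
  simp only [moriE, Finset.mul_sum, mul_left_comm]

theorem moriE_sum {ι : Type*} (N : ℕ) (β : ℝ) (s : Finset ι) (X : ι → ParentSeq N → ℝ) :
    moriE N β (fun f => ∑ k ∈ s, X k f) = ∑ k ∈ s, moriE N β (X k) := by
  simp only [moriE, Finset.mul_sum]
  exact Finset.sum_comm

theorem moriPr_eq_moriE (N : ℕ) (β : ℝ) (p : ParentSeq N → Prop) [DecidablePred p] :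
    moriPr N β p = moriE N β fun f => if p f then 1 else 0 := by
  simp only [moriPr, moriE, mul_ite, mul_one, mul_zero]
  congr!

theorem moriP_snoc {N : ℕ} (β : ℝ) (f : ParentSeq N) (x : Set.Icc 1 N) :
    moriP β (f.snoc x) = moriP β f * (attachWeight β f x / totalWeight β N) := by
  have hN : 1 ≤ N := x.2.1.trans x.2.2
  unfold moriP
  rw [← Finset.insert_Icc_right_eq_Icc_add_one (by omega : 2 ≤ N + 1),
    Finset.prod_insert (by simp), mul_comm]
  congr 1
  · refine Finset.prod_congr rfl fun t ht => ?_
    have htN := (Finset.mem_Icc.mp ht).2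
    rw [f.pval_snoc_of_le x htN, f.deg_snoc_of_le x _ (by omega)]
  · rw [f.pval_snoc_last, Nat.add_sub_cancel, f.deg_snoc_of_le x _ le_rfl]
    simp [attachWeight, totalWeight]

theorem moriE_succ {N : ℕ} (β : ℝ) (hN : 1 ≤ N) (X : ParentSeq (N + 1) → ℝ) :
    moriE (N + 1) β X = moriE N β fun f =>
      ∑ x : Set.Icc 1 N, attachWeight β f x / totalWeight β N * X (f.snoc x) := by
  unfold moriE
  rw [← (ParentSeq.snoc_bijective hN).sum_comp, Fintype.sum_prod_type]
  simp only [moriP_snoc, Finset.mul_sum, mul_assoc]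

/-- Conditioning on the first `N` vertices. -/
theorem moriE_succ_of_snoc {N : ℕ} {β : ℝ} (hβ : 0 < β) (hN : 1 ≤ N) {X : ParentSeq (N + 1) → ℝ}
    {Y : ParentSeq N → ℝ} {U : ParentSeq N → ℕ → ℝ}
    (hX : ∀ f (x : Set.Icc 1 N), X (f.snoc x) = Y f + U f x) :
    moriE (N + 1) β X = moriE N β fun f =>
      Y f + (∑ x ∈ Icc 1 N, attachWeight β f x * U f x) / totalWeight β N := by
  rw [moriE_succ β hN]
  congr 1
  funext f
  have sum_Icc (h : ℕ → ℝ) : ∑ x : Set.Icc 1 N, h x = ∑ x ∈ Icc 1 N, h x :=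
    (Finset.sum_subtype _ (fun x => by simp) h).symm
  simp only [hX]
  rw [sum_Icc fun x => attachWeight β f x / totalWeight β N * (Y f + U f x)]
  simp only [mul_add, Finset.sum_add_distrib, ← Finset.sum_mul, ← Finset.sum_div,
    sum_attachWeight β hN, div_mul_eq_mul_div]
  rw [mul_div_cancel_left₀ _ (totalWeight_pos hβ hN).ne']

theorem moriE_succ_of_snoc_eq {N : ℕ} {β : ℝ} (hβ : 0 < β) (hN : 1 ≤ N)
    {X : ParentSeq (N + 1) → ℝ} {Y : ParentSeq N → ℝ} (hX : ∀ f x, X (f.snoc x) = Y f) :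
    moriE (N + 1) β X = moriE N β Y := by
  rw [moriE_succ_of_snoc hβ hN (U := fun _ _ => 0) fun f x => by rw [hX, add_zero]]
  simp

theorem moriE_one {N : ℕ} {β : ℝ} (hβ : 0 < β) (hN : 1 ≤ N) : moriE N β (fun _ => 1) = 1 := by
  induction N, hN using Nat.le_induction with
  | base =>
    have : Unique (ParentSeq 1) :=
      { default := fun t => absurd (t.2.1.trans t.2.2) (by omega)
        uniq := fun f => ParentSeq.ext_pval fun t ht => by simp at ht }
    simp [moriE, moriP]
  | succ N hN ih => rw [moriE_succ_of_snoc_eq hβ hN fun _ _ => rfl, ih]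

theorem moriE_succ_attach_mul {N i : ℕ} {β : ℝ} (hβ : 0 < β) (hi : i ∈ Icc 1 N)
    {X : ParentSeq (N + 1) → ℝ} {Y : ParentSeq N → ℝ}
    (hX : ∀ f (x : Set.Icc 1 N), X (f.snoc x) = if (x : ℕ) = i then Y f else 0) :
    moriE (N + 1) β X = moriE N β (fun f => attachWeight β f i * Y f) / totalWeight β N := by
  have hN : 1 ≤ N := by have := Finset.mem_Icc.mp hi; omega
  rw [moriE_succ_of_snoc hβ hN (Y := fun _ => 0) (U := fun f x => if x = i then Y f else 0)
    fun f x => by rw [hX, zero_add], div_eq_inv_mul, ← moriE_const_mul]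
  simp [hi, div_eq_inv_mul]

theorem moriE_succ_mul_attachWeight {N j : ℕ} {β : ℝ} (hβ : 0 < β) (hj : j ∈ Icc 1 N)
    {X : ParentSeq (N + 1) → ℝ} {Y : ParentSeq N → ℝ} (hX : ∀ f x, X (f.snoc x) = Y f) :
    moriE (N + 1) β (fun f => X f * attachWeight β f j) =
      (1 + 1 / totalWeight β N) * moriE N β (fun f => Y f * attachWeight β f j) := by
  have hN : 1 ≤ N := by have := Finset.mem_Icc.mp hj; omega
  rw [moriE_succ_of_snoc hβ hN (Y := fun f => Y f * attachWeight β f j)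
    (U := fun f x => if x = j then Y f else 0) fun f x => by simp [hX, attachWeight_snoc, mul_add],
    ← moriE_const_mul]
  congr 1
  funext f
  simp only [mul_ite, mul_zero, Finset.sum_ite_eq', if_pos hj]
  ring

theorem moriE_succ_attachWeight_mul_attachWeight {N i j : ℕ} {β : ℝ} (hβ : 0 < β)
    (hi : i ∈ Icc 1 N) (hj : j ∈ Icc 1 N) (hij : i ≠ j) :
    moriE (N + 1) β (fun f => attachWeight β f i * attachWeight β f j) =
      (1 + 2 / totalWeight β N) *
        moriE N β (fun f => attachWeight β f i * attachWeight β f j) := by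
  have hN : 1 ≤ N := by have := Finset.mem_Icc.mp hi; omega
  rw [moriE_succ_of_snoc hβ hN (Y := fun f => attachWeight β f i * attachWeight β f j)
    (U := fun f x => (if x = i then attachWeight β f j else 0) +
      if x = j then attachWeight β f i else 0), ← moriE_const_mul]
  · congr 1
    funext f
    simp only [mul_add, Finset.sum_add_distrib, mul_ite, mul_zero, Finset.sum_ite_eq', if_pos hi,
      if_pos hj]
    ring
  · intro f x
    rw [attachWeight_snoc, attachWeight_snoc]
    split_ifs with hxi hxj
    · exact absurd (hxi.symm.trans hxj) hij
    all_goals ring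

/-- The factor by which an expectation grows between times `s` and `N` if it is multiplied by
`1 + p / totalWeight β r` at each time `r`. -/
noncomputable def growth (β p : ℝ) (s N : ℕ) : ℝ := ∏ r ∈ Ico s N, (1 + p / totalWeight β r)

theorem eq_growth_mul {β p : ℝ} {s N : ℕ} (hsN : s ≤ N) {x : ℕ → ℝ}
    (hx : ∀ r, s ≤ r → x (r + 1) = (1 + p / totalWeight β r) * x r) :
    x N = growth β p s N * x s := by
  induction N, hsN using Nat.le_induction with
  | base => simp [growth]
  | succ N hsN ih =>
    rw [hx N hsN, ih, growth, growth, Finset.prod_Ico_succ_top hsN]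
    ring

theorem moriE_attachWeight {N i : ℕ} {β : ℝ} (hβ : 0 < β) (hi : 1 ≤ i) (hiN : i ≤ N) :
    moriE N β (fun f => attachWeight β f i) =
      growth β 1 i N * ((if 2 ≤ i then 1 else 0) + β) := by
  have step (r : ℕ) (hr : i ≤ r) : moriE (r + 1) β (fun f => attachWeight β f i) =
      (1 + 1 / totalWeight β r) * moriE r β (fun f => attachWeight β f i) := by
    simpa only [one_mul] using moriE_succ_mul_attachWeight hβ (Finset.mem_Icc.mpr ⟨hi, hr⟩)
      (X := fun _ => 1) (Y := fun _ => 1) fun _ _ => rfl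
  have birth : moriE i β (fun f => attachWeight β f i) = (if 2 ≤ i then 1 else 0) + β := by
    simpa only [attachWeight_self, mul_one, moriE_one hβ hi] using
      moriE_const_mul i β ((if 2 ≤ i then 1 else 0) + β) fun _ => 1
  rw [eq_growth_mul hiN (x := fun N => moriE N β fun f => attachWeight β f i) step, birth]

theorem moriE_attachWeight_mul_attachWeight {N i j : ℕ} {β : ℝ} (hβ : 0 < β) (hi : 1 ≤ i)
    (hij : i < j) (hjN : j ≤ N) :
    moriE N β (fun f => attachWeight β f i * attachWeight β f j) =
      growth β 2 j N * ((1 + β) * (growth β 1 i j * ((if 2 ≤ i then 1 else 0) + β))) := by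
  have birth : moriE j β (fun f => attachWeight β f i * attachWeight β f j) =
      (1 + β) * moriE j β fun f => attachWeight β f i := by
    simp only [attachWeight_self, if_pos (by omega : 2 ≤ j), ← moriE_const_mul, mul_comm]
  rw [← moriE_attachWeight hβ hi hij.le, ← birth]
  refine eq_growth_mul hjN
    (x := fun N => moriE N β fun f => attachWeight β f i * attachWeight β f j) fun r hr => ?_
  exact moriE_succ_attachWeight_mul_attachWeight hβ (Finset.mem_Icc.mpr ⟨hi, by omega⟩)
    (Finset.mem_Icc.mpr ⟨by omega, hr⟩) hij.ne

theorem moriE_attach_mul_attachWeight {i j u v : ℕ} {β : ℝ} (hβ : 0 < β) (hi : i ∈ Icc 1 u)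
    (hj : j ∈ Icc 1 u) (hij : i ≠ j) (huv : u < v) :
    moriE v β (fun f => (if pval f (u + 1) = i then 1 else 0) * attachWeight β f j) =
      growth β 1 (u + 1) v *
        (moriE u β (fun f => attachWeight β f i * attachWeight β f j) / totalWeight β u) := by
  have attach : moriE (u + 1) β (fun f => (if pval f (u + 1) = i then 1 else 0) *
      attachWeight β f j) =
      moriE u β (fun f => attachWeight β f i * attachWeight β f j) / totalWeight β u := by
    refine moriE_succ_attach_mul hβ hi fun f x => ?_
    rw [f.pval_snoc_last, attachWeight_snoc]
    by_cases hx : (x : ℕ) = i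
    · simp [hx, hij]
    · simp [hx]
  rw [← attach]
  refine eq_growth_mul huv (x := fun N => moriE N β fun f =>
    (if pval f (u + 1) = i then 1 else 0) * attachWeight β f j) fun r hr => ?_
  refine moriE_succ_mul_attachWeight hβ (Finset.Icc_subset_Icc_right (by omega) hj) fun f x => ?_
  rw [f.pval_snoc_of_le x hr]

theorem moriPr_pval_eq_and_pval_eq_of_le {N M s t i j : ℕ} {β : ℝ} (hβ : 0 < β) (hM : 1 ≤ M)
    (hs : s ≤ M) (ht : t ≤ M) (hMN : M ≤ N) :
    moriPr N β (fun f => pval f s = i ∧ pval f t = j) =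
      moriPr M β (fun f => pval f s = i ∧ pval f t = j) := by
  simp only [moriPr_eq_moriE]
  induction N, hMN using Nat.le_induction with
  | base => rfl
  | succ N hN ih =>
    rw [← ih]
    refine moriE_succ_of_snoc_eq hβ (hM.trans hN) fun f x => ?_
    rw [f.pval_snoc_of_le x (hs.trans hN), f.pval_snoc_of_le x (ht.trans hN)]

theorem moriPr_pval_eq_and_pval_eq {N i j u v : ℕ} {β : ℝ} (hβ : 0 < β) (hi : i ∈ Icc 1 u)
    (hj : j ∈ Icc 1 u) (hij : i ≠ j) (huv : u < v) (hvN : v < N) :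
    moriPr N β (fun f => pval f (u + 1) = i ∧ pval f (v + 1) = j) =
      growth β 1 (u + 1) v * moriE u β (fun f => attachWeight β f i * attachWeight β f j) /
        (totalWeight β u * totalWeight β v) := by
  have attach : moriE (v + 1) β
      (fun f => if pval f (u + 1) = i ∧ pval f (v + 1) = j then 1 else 0) =
      moriE v β (fun f => attachWeight β f j * if pval f (u + 1) = i then 1 else 0) /
        totalWeight β v := by
    refine moriE_succ_attach_mul hβ (Finset.Icc_subset_Icc_right huv.le hj) fun f x => ?_
    simp only [f.pval_snoc_last, f.pval_snoc_of_le x huv, and_comm, ite_and]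
  rw [moriPr_pval_eq_and_pval_eq_of_le hβ (by omega : 1 ≤ v + 1) (by omega) le_rfl hvN,
    moriPr_eq_moriE, attach]
  simp only [mul_comm (attachWeight β _ j), moriE_attach_mul_attachWeight hβ hi hj hij huv]
  ring

/-- `x` equals `y` up to a factor `e ^ δ` with `|δ| ≤ ε`. Errors of this form add up when
approximations are chained or multiplied. -/
def ExpClose (ε x y : ℝ) : Prop := ∃ δ, |δ| ≤ ε ∧ x = y * Real.exp δ

namespace ExpClose

variable {ε ε' x x' y y' z : ℝ}

theorem refl (x : ℝ) : ExpClose 0 x x := ⟨0, by simp⟩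

theorem mono (h : ExpClose ε x y) (hε : ε ≤ ε') : ExpClose ε' x y :=
  let ⟨δ, hδ, hx⟩ := h
  ⟨δ, hδ.trans hε, hx⟩

theorem symm (h : ExpClose ε x y) : ExpClose ε y x := by
  obtain ⟨δ, hδ, rfl⟩ := h
  exact ⟨-δ, by rwa [abs_neg], by rw [mul_assoc, ← Real.exp_add]; simp⟩

theorem trans (h : ExpClose ε x y) (h' : ExpClose ε' y z) : ExpClose (ε + ε') x z := by
  obtain ⟨δ, hδ, rfl⟩ := h
  obtain ⟨δ', hδ', rfl⟩ := h'
  exact ⟨δ + δ', (abs_add_le δ δ').trans (add_le_add hδ hδ'), by rw [Real.exp_add]; ring⟩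

theorem mul (h : ExpClose ε x y) (h' : ExpClose ε' x' y') :
    ExpClose (ε + ε') (x * x') (y * y') := by
  obtain ⟨δ, hδ, rfl⟩ := h
  obtain ⟨δ', hδ', rfl⟩ := h'
  exact ⟨δ + δ', (abs_add_le δ δ').trans (add_le_add hδ hδ'), by rw [Real.exp_add]; ring⟩

theorem const_mul (k : ℝ) (h : ExpClose ε x y) : ExpClose ε (k * x) (k * y) := by
  simpa only [zero_add] using (refl k).mul h

theorem div (h : ExpClose ε x y) (h' : ExpClose ε' x' y') :
    ExpClose (ε + ε') (x / x') (y / y') := by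
  have inv : ExpClose ε' x'⁻¹ y'⁻¹ := by
    obtain ⟨δ, hδ, rfl⟩ := h'
    exact ⟨-δ, by rwa [abs_neg], by rw [mul_inv, Real.exp_neg]⟩
  simpa only [div_eq_mul_inv] using h.mul inv

theorem rpow (h : ExpClose ε x y) (hy : 0 ≤ y) (q : ℝ) :
    ExpClose (|q| * ε) (x ^ q) (y ^ q) := by
  obtain ⟨δ, hδ, rfl⟩ := h
  refine ⟨q * δ, by rw [abs_mul]; gcongr, ?_⟩
  rw [Real.mul_rpow hy (Real.exp_pos δ).le, ← Real.exp_mul, mul_comm δ]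

theorem exp_exp (x y : ℝ) : ExpClose |x - y| (Real.exp x) (Real.exp y) :=
  ⟨x - y, le_rfl, by rw [← Real.exp_add, add_sub_cancel]⟩

theorem one_add_exp (hx : 0 ≤ x) : ExpClose (x ^ 2) (1 + x) (Real.exp x) := by
  have hx1 : 0 < 1 + x := by linarith
  refine ⟨Real.log (1 + x) - x, ?_, by rw [← Real.exp_add, add_sub_cancel, Real.exp_log hx1]⟩
  have upper := Real.log_le_sub_one_of_pos hx1
  have lower := Real.one_sub_inv_le_log_of_pos hx1
  have inv_le : (1 + x)⁻¹ ≤ 1 - x + x ^ 2 := by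
    rw [inv_le_iff_one_le_mul₀ hx1]
    nlinarith [pow_nonneg hx 3]
  rw [abs_le]
  constructor <;> nlinarith

theorem of_le (hx : 0 < x) (hxy : x ≤ y) : ExpClose ((y - x) / x) x y := by
  have hy : 0 < y := hx.trans_le hxy
  refine ⟨Real.log x - Real.log y, ?_, by
    rw [Real.exp_sub, Real.exp_log hx, Real.exp_log hy, mul_div_cancel₀ _ hy.ne']⟩
  rw [abs_sub_comm, abs_of_nonneg (sub_nonneg.mpr (Real.log_le_log hx hxy)),
    ← Real.log_div hy.ne' hx.ne', sub_div, div_self hx.ne']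
  exact Real.log_le_sub_one_of_pos (div_pos hy hx)

theorem exists_one_add (h : ExpClose ε x y) :
    ∃ θ : ℝ, |θ| ≤ ε * Real.exp ε ∧ x = y * (1 + θ) := by
  obtain ⟨δ, hδ, rfl⟩ := h
  refine ⟨Real.exp δ - 1, ?_, by ring⟩
  have hε : 0 ≤ ε := (abs_nonneg δ).trans hδ
  obtain ⟨hδl, hδu⟩ := abs_le.mp hδ
  have lower := Real.add_one_le_exp δ
  have upper : Real.exp δ - 1 ≤ δ * Real.exp δ := by
    have := mul_le_mul_of_nonneg_right (Real.add_one_le_exp (-δ)) (Real.exp_pos δ).le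
    rw [← Real.exp_add, neg_add_cancel, Real.exp_zero] at this
    linarith
  have upper' : δ * Real.exp δ ≤ ε * Real.exp ε := by gcongr
  have := le_mul_of_one_le_right hε (Real.one_le_exp hε)
  rw [abs_le]
  constructor <;> linarith

theorem exists_sum_eq {ι : Type*} {s : Finset ι} {x : ι → ℝ} (hε : 0 ≤ ε)
    (h : ∀ k ∈ s, ExpClose ε (x k) y) :
    ∃ θ : ℝ, |θ| ≤ ε * Real.exp ε ∧ ∑ k ∈ s, x k = s.card * y * (1 + θ) := by
  choose! θ hθ hx using fun k hk => (h k hk).exists_one_add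
  refine ⟨(∑ k ∈ s, θ k) / s.card, ?_, ?_⟩
  · rw [abs_div, Nat.abs_cast]
    refine div_le_of_le_mul₀ s.card.cast_nonneg (by positivity) ?_
    calc |∑ k ∈ s, θ k| ≤ ∑ k ∈ s, |θ k| := Finset.abs_sum_le_sum_abs θ s
      _ ≤ s.card • (ε * Real.exp ε) := Finset.sum_le_card_nsmul s _ _ hθ
      _ = ε * Real.exp ε * s.card := by rw [nsmul_eq_mul, mul_comm]
  · rcases s.eq_empty_or_nonempty with rfl | hs
    · simp
    · have card_ne : (s.card : ℝ) ≠ 0 := mod_cast hs.card_pos.ne'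
      rw [Finset.sum_congr rfl hx, ← Finset.mul_sum, Finset.sum_add_distrib, Finset.sum_const,
        nsmul_one]
      field_simp

end ExpClose

theorem expClose_one_add_div_totalWeight {β p : ℝ} (hβ : 0 < β) (hp : 0 ≤ p) {r : ℕ}
    (hr : 1 ≤ r) :
    ExpClose (((p / β) ^ 2 + 2 * p / (β * (2 + β)) + p / (2 + β)) / (r : ℝ) ^ 2)
      (1 + p / totalWeight β r) (((r + 1) / r : ℝ) ^ (p / (2 + β))) := by
  have hr0 : (0 : ℝ) < r := mod_cast hr
  have hZ := totalWeight_pos hβ hr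
  have hZr := mul_le_totalWeight β hr
  have to_exp := ExpClose.one_add_exp (div_nonneg hp hZ.le)
  have change_exp := ExpClose.exp_exp (p / totalWeight β r) (1 / r * (p / (2 + β)))
  have from_exp := ((ExpClose.one_add_exp (by positivity : 0 ≤ 1 / (r : ℝ))).rpow
    (Real.exp_pos _).le (p / (2 + β))).symm
  rw [← Real.exp_mul, one_add_div hr0.ne'] at from_exp
  refine ((to_exp.trans change_exp).trans from_exp).mono ?_
  have sq_le : (p / totalWeight β r) ^ 2 ≤ (p / β) ^ 2 / (r : ℝ) ^ 2 := by
    rw [← div_pow, div_div]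
    gcongr
  have sub_eq : p / totalWeight β r - 1 / r * (p / (2 + β)) =
      2 * p / (totalWeight β r * ((2 + β) * r)) := by
    field_simp
    rw [totalWeight]
    ring
  have abs_sub_le : |p / totalWeight β r - 1 / r * (p / (2 + β))| ≤
      2 * p / (β * (2 + β)) / (r : ℝ) ^ 2 := by
    rw [sub_eq, abs_of_nonneg (by positivity), div_div]
    gcongr 2 * p / ?_
    calc β * (2 + β) * (r : ℝ) ^ 2 = β * r * ((2 + β) * r) := by ring
      _ ≤ totalWeight β r * ((2 + β) * r) := by gcongr
  rw [abs_of_nonneg (by positivity : 0 ≤ p / (2 + β)), one_div_pow, mul_one_div, add_div, add_div]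
  gcongr

theorem exists_expClose_growth {β p : ℝ} (hβ : 0 < β) (hp : 0 ≤ p) :
    ∃ C : ℝ, 0 ≤ C ∧ ∀ s N : ℕ, 1 ≤ s → s ≤ N →
      ExpClose (C / s) (growth β p s N) ((N / s : ℝ) ^ (p / (2 + β))) := by
  set C : ℝ := (p / β) ^ 2 + 2 * p / (β * (2 + β)) + p / (2 + β) with hC
  have hC0 : 0 ≤ C := by positivity
  refine ⟨2 * C, by positivity, fun s N hs hsN => ?_⟩
  have hs0 : (0 : ℝ) < s := mod_cast hs
  suffices telescoped : ExpClose (2 * C / s - 2 * C / N) (growth β p s N)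
      ((N / s : ℝ) ^ (p / (2 + β))) from
    telescoped.mono (sub_le_self _ (by positivity))
  induction N, hsN using Nat.le_induction with
  | base => simpa [growth, hs0.ne'] using ExpClose.refl 1
  | succ N hsN ih =>
    have hN : (1 : ℝ) ≤ N := mod_cast hs.trans hsN
    have step := ih.mul (expClose_one_add_div_totalWeight hβ hp (hs.trans hsN))
    rw [← Real.mul_rpow (by positivity) (by positivity), div_mul_div_cancel₀' (by positivity),
      ← hC] at step
    rw [growth, Finset.prod_Ico_succ_top hsN, ← growth]
    push_cast
    refine step.mono ?_
    have tail : C / (N : ℝ) ^ 2 ≤ 2 * C / N - 2 * C / (N + 1) := by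
      rw [div_sub_div _ _ (by positivity) (by positivity),
        div_le_div_iff₀ (by positivity) (by positivity)]
      nlinarith [mul_nonneg (mul_nonneg hC0 (zero_le_one.trans hN)) (sub_nonneg.mpr hN)]
    linarith

theorem expClose_ite_add {β : ℝ} (hβ : 0 < β) {i : ℕ} (hi : 1 ≤ i) :
    ExpClose (1 / β / i) ((if 2 ≤ i then 1 else 0) + β) (1 + β) := by
  rcases hi.eq_or_lt with rfl | hi
  · simpa using ExpClose.of_le hβ (by linarith : β ≤ 1 + β)
  · rw [if_pos (by omega)]
    exact (ExpClose.refl _).mono (by positivity)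

theorem expClose_totalWeight {β : ℝ} (hβ : 0 < β) {u : ℕ} (hu : 1 ≤ u) :
    ExpClose ((4 + β) / β / u) (totalWeight β u) ((2 + β) * (u + 1)) := by
  have : (0 : ℝ) < u := mod_cast hu
  have sub_eq : (2 + β) * (u + 1) - totalWeight β u = 4 + β := by
    rw [totalWeight]
    ring
  refine (ExpClose.of_le (totalWeight_pos hβ hu) (by linarith)).mono ?_
  rw [sub_eq, div_div]
  gcongr
  exact mul_le_totalWeight β hu

theorem exists_expClose_moriE_attachWeight_mul_attachWeight {β : ℝ} (hβ : 0 < β) :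
    ∃ C : ℝ, 0 ≤ C ∧ ∀ u, ∀ i ∈ Icc 1 u, ∀ j ∈ Icc 1 u, i ≠ j →
      ExpClose (C / (min i j : ℕ)) (moriE u β fun f => attachWeight β f i * attachWeight β f j)
        ((1 + β) ^ 2 * (i * j : ℝ) ^ (-(1 / (2 + β))) * (u : ℝ) ^ (2 * (1 / (2 + β)))) := by
  obtain ⟨C₁, hC₁, growth_one⟩ := exists_expClose_growth hβ zero_le_one
  obtain ⟨C₂, hC₂, growth_two⟩ := exists_expClose_growth hβ zero_le_two
  refine ⟨C₂ + (C₁ + 1 / β), by positivity, fun u i hi j hj hij => ?_⟩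
  wlog h : i < j generalizing i j
  · simpa only [mul_comm, min_comm] using this j hj i hi hij.symm (by omega)
  obtain ⟨hi, -⟩ := Finset.mem_Icc.mp hi
  obtain ⟨-, hju⟩ := Finset.mem_Icc.mp hj
  have hi0 : (0 : ℝ) < i := mod_cast hi
  have hj0 : (0 : ℝ) < j := hi0.trans (mod_cast h)
  have leading_term : (u / j : ℝ) ^ (2 / (2 + β)) *
      ((1 + β) * ((j / i : ℝ) ^ (1 / (2 + β)) * (1 + β))) =
      (1 + β) ^ 2 * (i * j : ℝ) ^ (-(1 / (2 + β))) * (u : ℝ) ^ (2 * (1 / (2 + β))) := by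
    rw [← mul_one_div 2, Real.div_rpow u.cast_nonneg hj0.le, Real.div_rpow hj0.le hi0.le,
      Real.rpow_neg (by positivity), Real.mul_rpow hi0.le hj0.le,
      congrArg ((j : ℝ) ^ ·) (two_mul _), Real.rpow_add hj0]
    field_simp
  rw [moriE_attachWeight_mul_attachWeight hβ hi h hju, ← leading_term, min_eq_left h.le]
  refine ((growth_two j u (by omega) hju).mul
    (((growth_one i j hi h.le).mul (expClose_ite_add hβ hi)).const_mul _)).mono ?_
  rw [add_div, add_div]
  gcongr

theorem expClose_cast_add_one {u : ℕ} (hu : 1 ≤ u) : ExpClose (1 / u) (u : ℝ) (u + 1) := by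
  simpa using ExpClose.of_le (mod_cast hu : (0 : ℝ) < u) (by linarith : (u : ℝ) ≤ u + 1)

theorem exists_expClose_growth_div {β : ℝ} (hβ : 0 < β) :
    ∃ C : ℝ, 0 ≤ C ∧ ∀ u v : ℕ, 1 ≤ u → u < v →
      ExpClose (C / u) (growth β 1 (u + 1) v / (totalWeight β u * totalWeight β v))
        (((u + 1) * (v + 1) : ℝ) ^ (1 / (2 + β) - 1) *
          (u + 1 : ℝ) ^ (-(2 * (1 / (2 + β)))) / (2 + β) ^ 2) := by
  obtain ⟨C, hC, growth_one⟩ := exists_expClose_growth hβ zero_le_one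
  set γ := 1 / (2 + β)
  have hγ0 : 0 ≤ γ := by positivity
  refine ⟨C + γ + ((4 + β) / β + (4 + β) / β), by positivity, fun u v hu huv => ?_⟩
  have : (0 : ℝ) < u := mod_cast hu
  have leading_term : ((v + 1) / (u + 1) : ℝ) ^ γ /
      ((2 + β) * (u + 1) * ((2 + β) * (v + 1))) =
      ((u + 1) * (v + 1) : ℝ) ^ (γ - 1) * (u + 1 : ℝ) ^ (-(2 * γ)) / (2 + β) ^ 2 := by
    rw [Real.div_rpow (by positivity) (by positivity), Real.rpow_sub_one (by positivity),
      Real.rpow_neg (by positivity), Real.mul_rpow (by positivity) (by positivity), two_mul γ,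
      Real.rpow_add (by positivity)]
    field_simp
  have ratio := ((expClose_cast_add_one (by omega : 1 ≤ v)).div
    (ExpClose.refl (u + 1 : ℝ))).rpow (by positivity) γ
  have growth_close := growth_one (u + 1) v (by omega) huv
  push_cast at growth_close
  rw [← leading_term]
  refine ((growth_close.trans ratio).div
    ((expClose_totalWeight hβ hu).mul (expClose_totalWeight hβ (by omega)))).mono ?_
  rw [abs_of_nonneg hγ0, add_zero, mul_one_div, add_div _ _ (u : ℝ), add_div C,
    add_div _ ((4 + β) / β)]
  gcongr
  linarith

theorem exists_expClose_moriPr {β : ℝ} (hβ : 0 < β) :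
    ∃ C : ℝ, 0 ≤ C ∧ ∀ N i j s t : ℕ, 1 ≤ i → 1 ≤ j → i ≠ j → max i j < min s t → s ≠ t →
      max s t ≤ N → ExpClose (C / (min i j : ℕ)) (moriPr N β fun f => pval f s = i ∧ pval f t = j)
        ((1 + β) ^ 2 / (2 + β) ^ 2 * (i * j : ℝ) ^ (-(1 / (2 + β))) *
          (s * t : ℝ) ^ (1 / (2 + β) - 1)) := by
  obtain ⟨C₁, hC₁, weights_close⟩ :=
    exists_expClose_moriE_attachWeight_mul_attachWeight hβ
  obtain ⟨C₂, hC₂, growth_close⟩ := exists_expClose_growth_div hβ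
  set γ := 1 / (2 + β)
  refine ⟨|2 * γ| + C₁ + C₂, by positivity, fun N i j s t hi hj hij hlt hst hN => ?_⟩
  wlog h : s < t generalizing i j s t
  · simpa only [mul_comm, min_comm, and_comm] using
      this j i t s hj hi hij.symm (by omega) hst.symm (by omega) (by omega)
  obtain ⟨u, rfl⟩ := Nat.exists_eq_add_of_le' (by omega : 1 ≤ s)
  obtain ⟨v, rfl⟩ := Nat.exists_eq_add_of_le' (by omega : 1 ≤ t)
  have hi : i ∈ Icc 1 u := Finset.mem_Icc.mpr (by omega)
  have hj : j ∈ Icc 1 u := Finset.mem_Icc.mpr (by omega)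
  have hu : 1 ≤ u := by omega
  have : (0 : ℝ) < (min i j : ℕ) := by exact_mod_cast (by omega : 0 < min i j)
  have hmin_le : ((min i j : ℕ) : ℝ) ≤ u := by exact_mod_cast (by omega : min i j ≤ u)
  have weights := (weights_close u i hi j hj hij).trans
    (((expClose_cast_add_one hu).rpow (by positivity) (2 * γ)).const_mul _)
  have leading_term : (1 + β) ^ 2 * (i * j : ℝ) ^ (-γ) * (u + 1 : ℝ) ^ (2 * γ) *
      (((u + 1) * (v + 1) : ℝ) ^ (γ - 1) * (u + 1 : ℝ) ^ (-(2 * γ)) / (2 + β) ^ 2) =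
      (1 + β) ^ 2 / (2 + β) ^ 2 * (i * j : ℝ) ^ (-γ) *
        (((u + 1 : ℕ) : ℝ) * (v + 1 : ℕ)) ^ (γ - 1) := by
    push_cast
    rw [Real.rpow_neg (by positivity : (0 : ℝ) ≤ u + 1)]
    field_simp
  rw [moriPr_pval_eq_and_pval_eq hβ hi hj hij (by omega) (by omega), mul_comm (growth ..),
    mul_div_assoc, ← leading_term]
  refine (weights.mul (growth_close u v hu (by omega))).mono ?_
  rw [mul_one_div, add_comm (C₁ / _), add_div, add_div]
  gcongr

/-- The vertices of the Móri tree that are merged into `u_a`, for `a ≥ 1`. -/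
def block (m a : ℕ) : Finset ℕ := Icc ((a - 1) * m + 1) (a * m)

theorem one_le_of_mem_block {m a i : ℕ} (hi : i ∈ block m a) : 1 ≤ i :=
  (Nat.le_add_left 1 _).trans (Finset.mem_Icc.mp hi).1

theorem le_of_mem_block {m a i : ℕ} (hm : 1 ≤ m) (hi : i ∈ block m a) : a ≤ i := by
  have lower := (Finset.mem_Icc.mp hi).1
  have := Nat.le_mul_of_pos_right (a - 1) hm
  omega

theorem lt_of_mem_block_of_mem_block {m a b i j : ℕ} (hab : a < b) (hi : i ∈ block m a)
    (hj : j ∈ block m b) : i < j := by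
  have upper := (Finset.mem_Icc.mp hi).2
  have lower := (Finset.mem_Icc.mp hj).1
  have := Nat.mul_le_mul_right m (Nat.le_sub_one_of_lt hab)
  omega

theorem card_block {m a : ℕ} (ha : 1 ≤ a) : (block m a).card = m := by
  obtain ⟨k, rfl⟩ := Nat.exists_eq_add_of_le' ha
  simp [block, Nat.add_mul]

theorem mem_block_iff {m a i : ℕ} (hm : 1 ≤ m) (ha : 1 ≤ a) (hi : 1 ≤ i) :
    i ∈ block m a ↔ blk m i = a := by
  obtain ⟨k, rfl⟩ := Nat.exists_eq_add_of_le' ha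
  obtain ⟨l, rfl⟩ := Nat.exists_eq_add_of_le' hi
  rw [block, blk, Finset.mem_Icc, Nat.add_sub_cancel, Nat.add_sub_cancel, Nat.add_right_cancel_iff,
    Nat.add_le_add_iff_right, Nat.add_one_le_iff, Nat.div_eq_iff hm, Nat.add_mul, one_mul]
  omega

theorem expClose_of_mem_block {m a i : ℕ} (hm : 1 ≤ m) (ha : 1 ≤ a) (hi : i ∈ block m a) :
    ExpClose (m / a) (i : ℝ) (a * m) := by
  have a_le : (a : ℝ) ≤ i := mod_cast le_of_mem_block hm hi
  have ha0 : (0 : ℝ) < a := mod_cast ha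
  obtain ⟨lower, upper⟩ := Finset.mem_Icc.mp hi
  have sub_le : (a * m : ℝ) - i ≤ m := by
    obtain ⟨k, rfl⟩ := Nat.exists_eq_add_of_le' ha
    have : ((k * m + 1 : ℕ) : ℝ) ≤ i := mod_cast lower
    push_cast at this ⊢
    linarith
  refine (ExpClose.of_le (ha0.trans_le a_le) (mod_cast upper)).mono ?_
  gcongr

theorem mult_eq_sum_block {n m a c : ℕ} (hm : 1 ≤ m) (ha : 1 ≤ a) (hac : a < c) (hcn : c ≤ n)
    (f : ParentSeq (n * m)) :
    mult n m f a c = ∑ t ∈ block m c, if pval f t ∈ block m a then 1 else 0 := by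
  have block_subset (t) (ht : t ∈ block m c) : t ∈ Icc 2 (n * m) := by
    have := le_of_mem_block hm ht
    have := (Finset.mem_Icc.mp ht).2.trans (Nat.mul_le_mul_right m hcn)
    exact Finset.mem_Icc.mpr (by omega)
  have joins_iff (t) (ht : t ∈ Icc 2 (n * m)) :
      (blk m t = a ∧ blk m (pval f t) = c) ∨ (blk m t = c ∧ blk m (pval f t) = a) ↔
        t ∈ block m c ∧ pval f t ∈ block m a := by
    have parent_mem := Finset.mem_Icc.mp (pval_mem_Icc f ht)
    have ht2 := Finset.mem_Icc.mp ht
    have hc : 1 ≤ c := by omega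
    rw [← mem_block_iff hm ha (by omega), ← mem_block_iff hm hc parent_mem.1,
      ← mem_block_iff hm hc (by omega), ← mem_block_iff hm ha parent_mem.1, or_iff_right]
    rintro ⟨hta, hpc⟩
    have := lt_of_mem_block_of_mem_block hac hta hpc
    omega
  rw [mult, Finset.filter_congr joins_iff, ← Finset.card_filter, ← Finset.filter_filter,
    Finset.filter_mem_eq_inter, Finset.inter_eq_right.mpr block_subset]

theorem moriE_mult_mul_mult {n m a b c : ℕ} (β : ℝ) (hm : 1 ≤ m) (ha : 1 ≤ a) (hab : a < b)
    (hbc : b < c) (hcn : c ≤ n) :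
    moriE (n * m) β (fun f => (mult n m f a c : ℝ) * (mult n m f b c : ℝ)) =
      ∑ k ∈ (block m c).offDiag ×ˢ (block m a ×ˢ block m b),
        moriPr (n * m) β fun f => pval f k.1.1 = k.2.1 ∧ pval f k.1.2 = k.2.2 := by
  simp only [moriPr_eq_moriE, ← moriE_sum]
  congr 1
  funext f
  have diag_vanishes : ∀ q ∈ (block m c).diag,
      (if pval f q.1 ∈ block m a then 1 else 0) * (if pval f q.2 ∈ block m b then 1 else 0) =
        (0 : ℝ) := by
    intro q hq
    obtain ⟨-, hq⟩ := Finset.mem_diag.mp hq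
    rw [← hq, ite_zero_mul_ite_zero, if_neg]
    exact fun ⟨hpa, hpb⟩ => (lt_of_mem_block_of_mem_block hab hpa hpb).false
  rw [mult_eq_sum_block hm ha (hab.trans hbc) hcn, mult_eq_sum_block hm (ha.trans hab.le) hbc hcn]
  push_cast
  rw [Finset.sum_mul_sum, ← Finset.sum_product', ← Finset.diag_union_offDiag,
    Finset.sum_union (Finset.disjoint_diag_offDiag _), Finset.sum_eq_zero diag_vanishes, zero_add,
    Finset.sum_product]
  refine Finset.sum_congr rfl fun q _ => ?_
  rw [Finset.sum_product, ← Finset.sum_ite_eq (block m a) (pval f q.1) fun _ => (1 : ℝ),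
    ← Finset.sum_ite_eq (block m b) (pval f q.2) fun _ => (1 : ℝ), Finset.sum_mul_sum]
  simp only [ite_zero_mul_ite_zero, one_mul]

theorem mul_rpow_mul_mul_rpow {a b c m β : ℝ} (hβ : 0 ≤ β) (ha : 0 < a) (hb : 0 < b) (hc : 0 < c)
    (hm : 0 < m) :
    (a * m * (b * m)) ^ (-(1 / (2 + β))) * (c * m * (c * m)) ^ (1 / (2 + β) - 1) =
      (a * b * c ^ (2 + 2 * β)) ^ (-(1 / (2 + β))) / m ^ 2 := by
  have c_exponent : (c * c) ^ (1 / (2 + β) - 1) = (c ^ (2 + 2 * β)) ^ (-(1 / (2 + β))) := by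
    rw [← sq, ← Real.rpow_natCast_mul hc.le, ← Real.rpow_mul hc.le]
    congr 1
    push_cast
    field_simp
    ring
  have m_exponent : (m * m) ^ (-(1 / (2 + β))) * (m * m) ^ (1 / (2 + β) - 1) = 1 / m ^ 2 := by
    rw [← Real.rpow_add (by positivity), neg_add_eq_sub, sub_sub_cancel_left, Real.rpow_neg_one,
      sq, one_div]
  rw [mul_mul_mul_comm, mul_mul_mul_comm c, Real.mul_rpow (by positivity) (by positivity),
    Real.mul_rpow (x := c * c) (by positivity) (by positivity), mul_mul_mul_comm, m_exponent,
    c_exponent, ← Real.mul_rpow (by positivity) (by positivity), mul_one_div]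

theorem expClose_rpow_of_mem_block {β : ℝ} (hβ : 0 ≤ β) {m a b c i j s t : ℕ} (hm : 1 ≤ m)
    (ha : 1 ≤ a) (hab : a ≤ b) (hac : a ≤ c) (hi : i ∈ block m a) (hj : j ∈ block m b)
    (hs : s ∈ block m c) (ht : t ∈ block m c) :
    ExpClose ((|-(1 / (2 + β))| + |1 / (2 + β) - 1|) * (m + m) / a)
      ((i * j : ℝ) ^ (-(1 / (2 + β))) * (s * t : ℝ) ^ (1 / (2 + β) - 1))
      ((a * b * (c : ℝ) ^ (2 + 2 * β)) ^ (-(1 / (2 + β))) / m ^ 2) := by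
  have ha0 : (0 : ℝ) < a := mod_cast ha
  have hab' : (a : ℝ) ≤ b := mod_cast hab
  have hac' : (a : ℝ) ≤ c := mod_cast hac
  have hc := ha.trans hac
  have parents := ((expClose_of_mem_block hm ha hi).mul
    (expClose_of_mem_block hm (ha.trans hab) hj)).rpow (by positivity) (-(1 / (2 + β)))
  have children := ((expClose_of_mem_block hm hc hs).mul
    (expClose_of_mem_block hm hc ht)).rpow (by positivity) (1 / (2 + β) - 1)
  rw [← mul_rpow_mul_mul_rpow hβ ha0 (ha0.trans_le hab') (ha0.trans_le hac') (mod_cast hm)]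
  refine (parents.mul children).mono ?_
  rw [mul_div_assoc, add_mul, add_div (m : ℝ) m]
  gcongr

theorem exists_expClose_moriPr_of_mem_block {β : ℝ} (hβ : 0 < β) {m : ℕ} (hm : 1 ≤ m) :
    ∃ C : ℝ, 0 ≤ C ∧ ∀ n a b c : ℕ, 1 ≤ a → a < b → b < c → c ≤ n →
      ∀ k ∈ (block m c).offDiag ×ˢ (block m a ×ˢ block m b),
        ExpClose (C / a)
          (moriPr (n * m) β fun f => pval f k.1.1 = k.2.1 ∧ pval f k.1.2 = k.2.2)
          ((1 + β) ^ 2 / (2 + β) ^ 2 *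
            (a * b * (c : ℝ) ^ (2 + 2 * β)) ^ (-(1 / (2 + β))) / m ^ 2) := by
  obtain ⟨C, hC, tree_close⟩ := exists_expClose_moriPr hβ
  refine ⟨C + (|-(1 / (2 + β))| + |1 / (2 + β) - 1|) * (m + m), by positivity, ?_⟩
  rintro n a b c ha hab hbc hcn ⟨⟨s, t⟩, i, j⟩ hk
  obtain ⟨⟨hs, ht, hst⟩, hi, hj⟩ : (s ∈ block m c ∧ t ∈ block m c ∧ s ≠ t) ∧
      i ∈ block m a ∧ j ∈ block m b := by
    simpa only [Finset.mem_product, Finset.mem_offDiag] using hk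
  have hij := lt_of_mem_block_of_mem_block hab hi hj
  have hjs := lt_of_mem_block_of_mem_block hbc hj hs
  have hjt := lt_of_mem_block_of_mem_block hbc hj ht
  have last_le : c * m ≤ n * m := Nat.mul_le_mul_right m hcn
  have hsN := (Finset.mem_Icc.mp hs).2.trans last_le
  have htN := (Finset.mem_Icc.mp ht).2.trans last_le
  have : (0 : ℝ) < a := mod_cast ha
  have a_le : (a : ℝ) ≤ i := mod_cast le_of_mem_block hm hi
  have tree := tree_close (n * m) i j s t (one_le_of_mem_block hi) (one_le_of_mem_block hj) hij.ne
    (by omega) hst (by omega)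
  rw [min_eq_left hij.le, mul_assoc] at tree
  have indices := expClose_rpow_of_mem_block hβ.le hm ha hab.le (hab.trans hbc).le hi hj hs ht
  rw [mul_div_assoc]
  refine (tree.trans (indices.const_mul _)).mono ?_
  rw [add_div C]
  gcongr

/-- Expected number of pairs `(v_c,v_a), (v_c,v_b)` of adjacent half-edges in `G^n_{m,β}`
(common vertex of largest index). -/
theorem expected_adjacent_pairs_largest_index (β : ℝ) (hβ : 0 < β) (m : ℕ) (hm : 1 ≤ m) :
    ∃ K : ℝ, 0 < K ∧ ∀ n : ℕ, 1 ≤ n → ∀ a b c : ℕ, 1 ≤ a → a < b → b < c → c ≤ n →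
      ∃ θ : ℝ, |θ| ≤ K / (a : ℝ) ∧
        moriE (n * m) β (fun f => (mult n m f a c : ℝ) * (mult n m f b c : ℝ)) =
          ((m : ℝ) * ((m : ℝ) - 1) * (1 + β) ^ 2 / (2 + β) ^ 2)
            * ((a : ℝ) * (b : ℝ) * (c : ℝ) ^ (2 + 2 * β)) ^ (-(1 / (2 + β)))
            * (1 + θ) := by
  obtain ⟨C, hC, blocks_close⟩ := exists_expClose_moriPr_of_mem_block hβ hm
  refine ⟨C * Real.exp C + 1, by positivity, fun n _ a b c ha hab hbc hcn => ?_⟩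
  have ha1 : (1 : ℝ) ≤ a := mod_cast ha
  obtain ⟨θ, hθ, sum_eq⟩ := ExpClose.exists_sum_eq (by positivity : 0 ≤ C / a)
    (blocks_close n a b c ha hab hbc hcn)
  refine ⟨θ, hθ.trans ?_, ?_⟩
  · calc C / a * Real.exp (C / a) ≤ C / a * Real.exp C := by
          gcongr
          exact div_le_self hC ha1
      _ = C * Real.exp C / a := div_mul_eq_mul_div ..
      _ ≤ (C * Real.exp C + 1) / a := by gcongr; linarith
  · have card_eq : (((block m c).offDiag ×ˢ (block m a ×ˢ block m b)).card : ℝ) =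
        m * (m - 1) * m ^ 2 := by
      rw [Finset.card_product, Finset.card_product, Finset.offDiag_card, card_block ha,
        card_block (by omega), card_block (by omega)]
      push_cast [Nat.le_mul_self m]
      ring
    rw [moriE_mult_mul_mult β hm ha hab hbc hcn, sum_eq, card_eq]
    field_simp
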